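/- Let β ≥ 0 and let 𝐜^(1), 𝐜^(2) ∈ M_N([0,∞)). Then |p_N(β,𝐜^(2)) − p_N(β,𝐜^(1))| ≤ (β/(2N²)) Σ_{i,j=1}^N |c_{ij}^(2) − c_{ij}^(1)|. In particular, for two constants c₁, c₂ ≥ 0 (constant matrices), |p_N(β,c₂) − p_N(β,c₁)| ≤ (β/2)|c₂ − c₁|. -/

import Mathlib

open MeasureTheory Filter

/-- Poisson probability mass function with parameter `lam`. -/
noncomputable def poissonPMF (lam : ℝ) (k : ℕ) : ℝ :=
  Real.exp (-lam) * lam ^ k / (Nat.factorial k)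

/-- Potts Hamiltonian `H_N(σ, J) = Σ_{i,j} J_{ij} δ(σ_i, σ_j)`. -/
noncomputable def potts.H (q N : ℕ) (σ : Fin N → Fin q) (J : Fin N → Fin N → ℝ) : ℝ :=
  ∑ i, ∑ j, J i j * (if σ i = σ j then (1 : ℝ) else 0)

/-- Partition function `Z_N(J)`. -/
noncomputable def potts.Z (q N : ℕ) (J : Fin N → Fin N → ℝ) : ℝ :=
  ∑ σ : Fin N → Fin q, Real.exp (- potts.H q N σ J)

/-- Expectation over the Poissonian disorder: the entries `J_{ij}` are independent
Poisson random variables with means `c_{ij} / (2N)`. -/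
noncomputable def potts.E (N : ℕ) (c : Fin N → Fin N → ℝ)
    (g : (Fin N → Fin N → ℕ) → ℝ) : ℝ :=
  ∑' J : Fin N → Fin N → ℕ,
    (∏ i, ∏ j, poissonPMF (c i j / (2 * N)) (J i j)) * g J

/-- Quenched pressure for a general nonnegative connectivity matrix `c`. -/
noncomputable def potts.pmat (q N : ℕ) (β : ℝ) (c : Fin N → Fin N → ℝ) : ℝ :=
  potts.E N c (fun J => (1 / N) * Real.log (potts.Z q N (fun i j => β * (J i j : ℝ))))

/-- Quenched pressure for the constant connectivity matrix `c_{ij} ≡ c`. -/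
noncomputable def potts.p (q N : ℕ) (β c : ℝ) : ℝ :=
  potts.pmat q N β (fun _ _ => c)

/-- Annealed pressure `𝒫(β, c) = ln q + (c/2) ln(1 - (1 - e^{-β})/q)`. -/
noncomputable def potts.annealed (q : ℕ) (β c : ℝ) : ℝ :=
  Real.log q + (c / 2) * Real.log (1 - (1 - Real.exp (-β)) / q)

open ProbabilityTheory in
lemma pois_hasSum_mean (r : NNReal) :
    HasSum (fun n : ℕ => Real.exp (-r) * (r:ℝ) ^ n / (n.factorial : ℝ) * (n : ℝ)) r := by
  rw [← hasSum_nat_add_iff' 1]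
  have h := (hasSum_one_poissonMeasure r).mul_left (r : ℝ)
  simp only [Finset.range_one, Finset.sum_singleton, Nat.cast_zero, mul_zero, sub_zero]
  rw [mul_one] at h
  convert! h using 2 with n
  rw [Nat.factorial_succ]
  push_cast
  have : (n.factorial : ℝ) ≠ 0 := by positivity
  have : (n + 1 : ℝ) ≠ 0 := by positivity
  field_simp
  try ring

open ProbabilityTheory in
lemma pois_integrable (r : NNReal) : Integrable (fun n : ℕ => (n : ℝ)) (poissonMeasure r) := by
  rw [integrable_poissonMeasure_iff]
  simpa using (pois_hasSum_mean r).summable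

open ProbabilityTheory in
lemma pois_mean (r : NNReal) : ∫ n : ℕ, (n : ℝ) ∂(poissonMeasure r) = r := by
  rw [integral_poissonMeasure]
  simpa using (pois_hasSum_mean r).tsum_eq

/-- the disorder law -/
noncomputable def muJ (N : ℕ) (r : Fin N → Fin N → NNReal) : Measure (Fin N → Fin N → ℕ) :=
  Measure.pi fun i => Measure.pi fun j => ProbabilityTheory.poissonMeasure (r i j)

instance (N : ℕ) (r : Fin N → Fin N → NNReal) : IsProbabilityMeasure (muJ N r) := by
  unfold muJ; infer_instance

/-- the coupling -/
noncomputable def nuJ (N : ℕ) (r s : Fin N → Fin N → NNReal) :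
    Measure (Fin N → Fin N → ℕ × ℕ) :=
  Measure.pi fun i => Measure.pi fun j =>
    (ProbabilityTheory.poissonMeasure (r i j)).prod (ProbabilityTheory.poissonMeasure (s i j))

instance (N : ℕ) (r s : Fin N → Fin N → NNReal) : IsProbabilityMeasure (nuJ N r s) := by
  unfold nuJ; infer_instance

lemma nuJ_map (N : ℕ) (r s t : Fin N → Fin N → NNReal) (f : ℕ × ℕ → ℕ)
    (h : ∀ i j, ((ProbabilityTheory.poissonMeasure (r i j)).prod
      (ProbabilityTheory.poissonMeasure (s i j))).map f
        = ProbabilityTheory.poissonMeasure (t i j)) :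
    (nuJ N r s).map (fun x i j => f (x i j)) = muJ N t := by
  have h1 : ∀ i, (Measure.pi fun j => (ProbabilityTheory.poissonMeasure (r i j)).prod
      (ProbabilityTheory.poissonMeasure (s i j))).map (fun (y : Fin N → ℕ × ℕ) j => f (y j))
        = Measure.pi fun j => ProbabilityTheory.poissonMeasure (t i j) := by
    intro i
    have : ∀ j, SigmaFinite (((ProbabilityTheory.poissonMeasure (r i j)).prod
      (ProbabilityTheory.poissonMeasure (s i j))).map f) := by
      intro j; rw [h]; infer_instance
    rw [Measure.pi_map_pi (fun j => (Measurable.of_discrete).aemeasurable)]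
    simp_rw [h]
  unfold nuJ muJ
  have : ∀ i, SigmaFinite ((Measure.pi fun j => (ProbabilityTheory.poissonMeasure (r i j)).prod
      (ProbabilityTheory.poissonMeasure (s i j))).map
        (fun (y : Fin N → ℕ × ℕ) j => f (y j))) := by
    intro i; rw [h1]; infer_instance
  have hm : Measurable (fun (y : Fin N → ℕ × ℕ) j => f (y j)) :=
    measurable_pi_lambda _ fun j => (Measurable.of_discrete (f := f)).comp (measurable_pi_apply j)
  rw [Measure.pi_map_pi (f := fun _ (y : Fin N → ℕ × ℕ) j => f (y j)) (fun i => hm.aemeasurable)]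
  simp_rw [h1]

lemma muJ_integrable_coord (N : ℕ) (r : Fin N → Fin N → NNReal) (i j : Fin N) :
    Integrable (fun J : Fin N → Fin N → ℕ => (J i j : ℝ)) (muJ N r) := by
  unfold muJ
  refine integrable_comp_eval (X := fun _ : Fin N => Fin N → ℕ) (i := i)
    (f := fun y : Fin N → ℕ => (y j : ℝ)) ?_
  exact integrable_comp_eval (X := fun _ : Fin N => ℕ) (i := j)
    (f := fun y : ℕ => (y : ℝ)) (pois_integrable _)

lemma muJ_integral_coord (N : ℕ) (r : Fin N → Fin N → NNReal) (i j : Fin N) :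
    ∫ J : Fin N → Fin N → ℕ, (J i j : ℝ) ∂(muJ N r) = r i j := by
  unfold muJ
  have hm : Measurable (fun y : Fin N → ℕ => (y j : ℝ)) := by fun_prop
  rw [integral_comp_eval (X := fun _ : Fin N => Fin N → ℕ) (i := i)
    (f := fun y : Fin N → ℕ => (y j : ℝ)) hm.aestronglyMeasurable]
  rw [integral_comp_eval (X := fun _ : Fin N => ℕ) (i := j)
    (f := fun y : ℕ => (y : ℝ))
    (Measurable.of_discrete).aestronglyMeasurable, pois_mean]

/-- L-Lipschitz with respect to adding. -/
def IncLip (N : ℕ) (L : ℝ) (g : (Fin N → Fin N → ℕ) → ℝ) : Prop :=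
  ∀ J D : Fin N → Fin N → ℕ, |g (fun i j => J i j + D i j) - g J| ≤ L * ∑ i, ∑ j, (D i j : ℝ)

lemma IncLip.integrable {N : ℕ} {L : ℝ} {g : (Fin N → Fin N → ℕ) → ℝ} (hg : IncLip N L g)
    (r : Fin N → Fin N → NNReal) : Integrable g (muJ N r) := by
  have h : Integrable (fun J : Fin N → Fin N → ℕ =>
      |g (fun _ _ => 0)| + L * ∑ i, ∑ j, (J i j : ℝ)) (muJ N r) := by
    refine (integrable_const _).add (Integrable.const_mul ?_ _)
    exact integrable_finsetSum _ fun i _ => integrable_finsetSum _ fun j _ =>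
      muJ_integrable_coord N r i j
  refine h.mono' (Measurable.of_discrete).aestronglyMeasurable (Eventually.of_forall fun J => ?_)
  have h1 := hg (fun _ _ => 0) J
  simp only [zero_add] at h1
  have h2 := abs_sub_abs_le_abs_sub (g J) (g (fun _ _ => 0))
  rw [Real.norm_eq_abs]
  have h3 : (fun i j => J i j) = J := rfl
  rw [h3] at h1
  linarith

lemma IncLip.step {N : ℕ} {L : ℝ} {g : (Fin N → Fin N → ℕ) → ℝ} (hg : IncLip N L g)
    (r s : Fin N → Fin N → NNReal) :
    |∫ J, g J ∂(muJ N (fun i j => r i j + s i j)) - ∫ J, g J ∂(muJ N r)|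
      ≤ L * ∑ i, ∑ j, (s i j : ℝ) := by
  have m1 : (nuJ N r s).map (fun x i j => (x i j).1) = muJ N r :=
    nuJ_map N r s r Prod.fst (fun i j => by
      have := Measure.map_fst_prod (μ := ProbabilityTheory.poissonMeasure (r i j))
        (ν := ProbabilityTheory.poissonMeasure (s i j))
      simpa using this)
  have m2 : (nuJ N r s).map (fun x i j => (x i j).2) = muJ N s :=
    nuJ_map N r s s Prod.snd (fun i j => by
      have := Measure.map_snd_prod (μ := ProbabilityTheory.poissonMeasure (r i j))
        (ν := ProbabilityTheory.poissonMeasure (s i j))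
      simpa using this)
  have m3 : (nuJ N r s).map (fun x i j => (x i j).1 + (x i j).2)
      = muJ N (fun i j => r i j + s i j) :=
    nuJ_map N r s _ (fun p => p.1 + p.2) (fun i j =>
      ProbabilityTheory.poissonMeasure_conv_poissonMeasure (r i j) (s i j))
  have a1 : AEMeasurable (fun (x : Fin N → Fin N → ℕ × ℕ) i j => (x i j).1) (nuJ N r s) :=
    Measurable.of_discrete.aemeasurable
  have a2 : AEMeasurable (fun (x : Fin N → Fin N → ℕ × ℕ) i j => (x i j).2) (nuJ N r s) :=
    Measurable.of_discrete.aemeasurable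
  have a3 : AEMeasurable (fun (x : Fin N → Fin N → ℕ × ℕ) i j => (x i j).1 + (x i j).2)
    (nuJ N r s) := Measurable.of_discrete.aemeasurable
  have i1 := (m1 ▸ hg.integrable r : Integrable g _).comp_aemeasurable a1
  have i3 := (m3 ▸ hg.integrable (fun i j => r i j + s i j) : Integrable g _).comp_aemeasurable a3
  have hd : Integrable (fun J : Fin N → Fin N → ℕ => L * ∑ i, ∑ j, (J i j : ℝ)) (muJ N s) :=
    Integrable.const_mul (integrable_finsetSum _ fun i _ => integrable_finsetSum _ fun j _ =>
      muJ_integrable_coord N s i j) _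
  have i2 := (m2 ▸ hd : Integrable _ _).comp_aemeasurable a2
  have e2 : ∫ J : Fin N → Fin N → ℕ, L * ∑ i, ∑ j, (J i j : ℝ) ∂(muJ N s)
      = L * ∑ i, ∑ j, (s i j : ℝ) := by
    rw [integral_const_mul, integral_finsetSum]
    · congr 1
      refine Finset.sum_congr rfl fun i _ => ?_
      rw [integral_finsetSum _ fun j _ => muJ_integrable_coord N s i j]
      exact Finset.sum_congr rfl fun j _ => muJ_integral_coord N s i j
    · exact fun i _ => integrable_finsetSum _ fun j _ => muJ_integrable_coord N s i j
  rw [← e2, ← m1, ← m2, ← m3, integral_map a1 Measurable.of_discrete.aestronglyMeasurable,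
    integral_map a2 Measurable.of_discrete.aestronglyMeasurable,
    integral_map a3 Measurable.of_discrete.aestronglyMeasurable]
  have i4 := integral_sub i3 i1
  simp only [Function.comp_apply] at i4
  rw [← i4]
  refine (abs_integral_le_integral_abs).trans ?_
  refine integral_mono (i3.sub i1).abs i2 fun x => ?_
  exact hg (fun i j => (x i j).1) (fun i j => (x i j).2)

lemma IncLip.E_eq {N : ℕ} {L : ℝ} {g : (Fin N → Fin N → ℕ) → ℝ} (hg : IncLip N L g)
    (c : Fin N → Fin N → ℝ) (r : Fin N → Fin N → NNReal)
    (h : ∀ i j, c i j / (2 * N) = r i j) :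
    potts.E N c g = ∫ J, g J ∂(muJ N r) := by
  rw [integral_countable (hg.integrable r)]
  unfold potts.E
  refine tsum_congr fun J => ?_
  rw [smul_eq_mul]
  congr 1
  unfold muJ
  rw [measureReal_def, Measure.pi_singleton, ENNReal.toReal_prod]
  refine Finset.prod_congr rfl fun i _ => ?_
  rw [Measure.pi_singleton, ENNReal.toReal_prod]
  refine Finset.prod_congr rfl fun j _ => ?_
  rw [← measureReal_def, ProbabilityTheory.poissonMeasure_real_singleton, h]
  rfl

lemma pressure_incLip (q N : ℕ) (hq : 2 ≤ q) (β : ℝ) (hβ : 0 ≤ β) :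
    IncLip N (β / N) (fun J => (1 / N) *
      Real.log (potts.Z q N (fun i j => β * (J i j : ℝ)))) := by
  intro J D
  have : NeZero q := ⟨by omega⟩
  set S : ℝ := ∑ i, ∑ j, (D i j : ℝ) with hS
  have zpos : ∀ K : Fin N → Fin N → ℝ, 0 < potts.Z q N K := fun K =>
    Finset.sum_pos (fun σ _ => Real.exp_pos _) Finset.univ_nonempty
  have hH : ∀ σ, potts.H q N σ (fun i j => β * ((J i j + D i j : ℕ) : ℝ))
      = potts.H q N σ (fun i j => β * (J i j : ℝ))
        + β * ∑ i, ∑ j, (D i j : ℝ) * (if σ i = σ j then (1 : ℝ) else 0) := by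
    intro σ
    unfold potts.H
    simp only [Finset.mul_sum, ← Finset.sum_add_distrib]
    refine Finset.sum_congr rfl fun i _ => Finset.sum_congr rfl fun j _ => ?_
    push_cast; ring
  have b0 : ∀ σ : Fin N → Fin q,
      0 ≤ ∑ i, ∑ j, (D i j : ℝ) * (if σ i = σ j then (1 : ℝ) else 0) := fun σ =>
    Finset.sum_nonneg fun i _ => Finset.sum_nonneg fun j _ => by split_ifs <;> simp
  have b1 : ∀ σ : Fin N → Fin q,
      ∑ i, ∑ j, (D i j : ℝ) * (if σ i = σ j then (1 : ℝ) else 0) ≤ S := fun σ =>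
    Finset.sum_le_sum fun i _ => Finset.sum_le_sum fun j _ => by split_ifs <;> simp
  have u1 : potts.Z q N (fun i j => β * ((J i j + D i j : ℕ) : ℝ))
      ≤ potts.Z q N (fun i j => β * (J i j : ℝ)) := by
    refine Finset.sum_le_sum fun σ _ => Real.exp_le_exp.2 ?_
    rw [hH]
    have := mul_nonneg hβ (b0 σ)
    linarith
  have u2 : Real.exp (-(β * S)) * potts.Z q N (fun i j => β * (J i j : ℝ))
      ≤ potts.Z q N (fun i j => β * ((J i j + D i j : ℕ) : ℝ)) := by
    unfold potts.Z
    rw [Finset.mul_sum]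
    refine Finset.sum_le_sum fun σ _ => ?_
    rw [← Real.exp_add]
    refine Real.exp_le_exp.2 ?_
    rw [hH]
    have := mul_le_mul_of_nonneg_left (b1 σ) hβ
    linarith
  have l1 := Real.log_le_log (zpos _) u1
  have l2 := Real.log_le_log (mul_pos (Real.exp_pos _) (zpos _)) u2
  rw [Real.log_mul (Real.exp_pos _).ne' (zpos _).ne', Real.log_exp] at l2
  have hn : (0:ℝ) ≤ 1 / N := by positivity
  rw [← mul_sub, abs_mul, abs_of_nonneg hn]
  have : β / N * S = 1 / N * (β * S) := by ring
  rw [this]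
  refine mul_le_mul_of_nonneg_left ?_ hn
  rw [abs_le]
  constructor
  · linarith
  · linarith [show 0 ≤ β * S from mul_nonneg hβ
      (Finset.sum_nonneg fun i _ => Finset.sum_nonneg fun j _ => by positivity)]

lemma pmat_step (q N : ℕ) (hq : 2 ≤ q) (β : ℝ) (hβ : 0 ≤ β)
    (m c : Fin N → Fin N → ℝ) (hm : ∀ i j, 0 ≤ m i j) (hc : ∀ i j, m i j ≤ c i j) :
    |potts.pmat q N β c - potts.pmat q N β m| ≤
        (β / (2 * (N : ℝ) ^ 2)) * ∑ i, ∑ j, (c i j - m i j) := by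
  have hg := pressure_incLip q N hq β hβ
  let r : Fin N → Fin N → NNReal := fun i j =>
    ⟨m i j / (2 * N), div_nonneg (hm i j) (by positivity)⟩
  let s : Fin N → Fin N → NNReal := fun i j =>
    ⟨(c i j - m i j) / (2 * N), div_nonneg (sub_nonneg.2 (hc i j)) (by positivity)⟩
  have h := hg.step r s
  unfold potts.pmat
  rw [hg.E_eq c (fun i j => r i j + s i j) (fun i j => by
      rw [NNReal.coe_add]
      change _ = m i j / (2 * N) + (c i j - m i j) / (2 * N)
      ring),
    hg.E_eq m r (fun i j => rfl)]
  refine h.trans (le_of_eq ?_)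
  simp only [Finset.mul_sum]
  refine Finset.sum_congr rfl fun i _ => Finset.sum_congr rfl fun j _ => ?_
  change β / N * ((c i j - m i j) / (2 * N)) = _
  rw [div_mul_div_comm, div_mul_eq_mul_div]
  congr 1
  ring

lemma pmat_lip (q N : ℕ) (hq : 2 ≤ q) (β : ℝ) (hβ : 0 ≤ β)
    (c₁ c₂ : Fin N → Fin N → ℝ)
    (h₁ : ∀ i j, 0 ≤ c₁ i j) (h₂ : ∀ i j, 0 ≤ c₂ i j) :
    |potts.pmat q N β c₂ - potts.pmat q N β c₁| ≤
        (β / (2 * (N : ℝ) ^ 2)) * ∑ i, ∑ j, |c₂ i j - c₁ i j| := by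
  have A := pmat_step q N hq β hβ (fun i j => min (c₁ i j) (c₂ i j)) c₁
    (fun i j => le_min (h₁ i j) (h₂ i j)) (fun i j => min_le_left _ _)
  have B := pmat_step q N hq β hβ (fun i j => min (c₁ i j) (c₂ i j)) c₂
    (fun i j => le_min (h₁ i j) (h₂ i j)) (fun i j => min_le_right _ _)
  have e : ∑ i, ∑ j, |c₂ i j - c₁ i j| = ∑ i, ∑ j, (c₂ i j - min (c₁ i j) (c₂ i j))
      + ∑ i, ∑ j, (c₁ i j - min (c₁ i j) (c₂ i j)) := by
    simp only [← Finset.sum_add_distrib]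
    refine Finset.sum_congr rfl fun i _ => Finset.sum_congr rfl fun j _ => ?_
    rcases le_total (c₁ i j) (c₂ i j) with h | h
    · rw [min_eq_left h, abs_of_nonneg (sub_nonneg.2 h)]; ring
    · rw [min_eq_right h, abs_of_nonpos (sub_nonpos.2 h)]; ring
  rw [e, mul_add]
  rw [abs_sub_comm] at A
  exact (abs_sub_le _ _ _).trans (add_le_add B A)

/-- Lipschitz bound for the quenched pressure in the connectivity
matrix, and the constant-matrix special case. -/
theorem statement5 (q N : ℕ) (hq : 2 ≤ q) (hN : 0 < N) (β : ℝ) (hβ : 0 ≤ β)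
    (c₁ c₂ : Fin N → Fin N → ℝ)
    (h₁ : ∀ i j, 0 ≤ c₁ i j) (h₂ : ∀ i j, 0 ≤ c₂ i j) :
    |potts.pmat q N β c₂ - potts.pmat q N β c₁| ≤
        (β / (2 * (N : ℝ) ^ 2)) * ∑ i, ∑ j, |c₂ i j - c₁ i j| ∧
    ∀ a b : ℝ, 0 ≤ a → 0 ≤ b →
      |potts.p q N β b - potts.p q N β a| ≤ (β / 2) * |b - a| := by
  refine ⟨pmat_lip q N hq β hβ c₁ c₂ h₁ h₂, fun a b ha hb => ?_⟩
  have h := pmat_lip q N hq β hβ (fun _ _ => a) (fun _ _ => b) (fun _ _ => ha) (fun _ _ => hb)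
  refine h.trans (le_of_eq ?_)
  have hN' : (N : ℝ) ≠ 0 := by positivity
  simp only [Finset.sum_const, Finset.card_univ, Fintype.card_fin, nsmul_eq_mul]
  field_simp
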